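/- Let p ∈ (1,∞), C > 0 and k ∈ ℕ. Let (x_n)_{n=1}^k be a finite sequence in a normed space such that for all l ∈ {1,…,k}, all m_1 < ⋯ < m_l in {1,…,k} and all signs ε_1,…,ε_l ∈ {−1,1}, one has ‖Σ_{j=1}^l ε_j x_{m_j}‖ ≤ C·l^{1/p}. Then for every ε ∈ (0, p−1) there exists a constant C̃ depending only on p, C and ε such that ‖Σ_{n=1}^k a_n x_n‖ ≤ C̃·(Σ_{n=1}^k |a_n|^{p−ε})^{1/(p−ε)} for all real scalars a_1,…,a_k. -/

import Mathlib

universe u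

/-- A bundled normed space over `ℝ`. -/
structure NormedSpacePkg : Type (u + 1) where
  carrier : Type u
  [grp : NormedAddCommGroup carrier]
  [mod : NormedSpace ℝ carrier]

attribute [instance] NormedSpacePkg.grp NormedSpacePkg.mod

/-! A nonnegative combination is a superposition of plain sums over level sets,
`∑ bᵢ yᵢ = ∫₀^M ∑_{bᵢ ≥ t} yᵢ dt` for `M ≥ max bᵢ`. With `S = ∑ bᵢ ^ q`, Markov's inequality
bounds the level set at height `t` by `S / t ^ q` elements, so the integrand has norm at most
`C (S / t ^ q) ^ (1 / p)`. This is integrable at `0` because `q < p`, and since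
`max bᵢ ≤ S ^ (1 / q)`, its integral over `[0, S ^ (1 / q)]` is a multiple of `S ^ (1 / q)`. -/

open Finset

section LevelSets

variable {ι E : Type*} {s : Finset ι} {b : ι → ℝ}

theorem sum_smul_eq_integral_sum_filter_le [NormedAddCommGroup E] [NormedSpace ℝ E]
    [CompleteSpace E] {M : ℝ} (hb : ∀ i ∈ s, b i ∈ Set.Icc 0 M) (y : ι → E) :
    ∑ i ∈ s, b i • y i = ∫ t in (0 : ℝ)..M, ∑ i ∈ s with t ≤ b i, y i := by
  have integrable_level (i : ι) :
      IntervalIntegrable ({t | t ≤ b i}.indicator fun _ ↦ y i) MeasureTheory.volume 0 M := by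
    rw [intervalIntegrable_iff]
    exact (intervalIntegrable_iff.1 intervalIntegrable_const).indicator measurableSet_Iic
  calc ∑ i ∈ s, b i • y i
      = ∑ i ∈ s, ∫ t in (0 : ℝ)..M, {t | t ≤ b i}.indicator (fun _ ↦ y i) t :=
        sum_congr rfl fun i hi ↦ by
          rw [intervalIntegral.integral_indicator (hb i hi), intervalIntegral.integral_const,
            sub_zero]
    _ = ∫ t in (0 : ℝ)..M, ∑ i ∈ s, {t | t ≤ b i}.indicator (fun _ ↦ y i) t :=
        (intervalIntegral.integral_finsetSum fun i _ ↦ integrable_level i).symm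
    _ = ∫ t in (0 : ℝ)..M, ∑ i ∈ s with t ≤ b i, y i := by
        simp only [Set.indicator_apply, Set.mem_ofPred_eq, sum_filter]

theorem norm_sum_smul_le_integral [SeminormedAddCommGroup E] [NormedSpace ℝ E] {M : ℝ}
    (hM : 0 ≤ M) (hb : ∀ i ∈ s, b i ∈ Set.Icc 0 M) {y : ι → E} {g : ℝ → ℝ}
    (hg : IntervalIntegrable g MeasureTheory.volume 0 M)
    (hyg : ∀ t ∈ Set.Ioc 0 M, ‖∑ i ∈ s with t ≤ b i, y i‖ ≤ g t) :
    ‖∑ i ∈ s, b i • y i‖ ≤ ∫ t in (0 : ℝ)..M, g t := by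
  -- The Bochner integral needs completeness, so the level-set formula is used in the completion.
  let φ : E →ₗᵢ[ℝ] UniformSpace.Completion E := UniformSpace.Completion.toComplₗᵢ
  rw [← φ.norm_map, map_sum]
  simp only [map_smul]
  rw [sum_smul_eq_integral_sum_filter_le hb]
  refine intervalIntegral.norm_integral_le_of_norm_le hM (.of_forall fun t ht ↦ ?_) hg
  rw [← map_sum, φ.norm_map]
  exact hyg t ht

theorem card_filter_le_mul_rpow_le_sum_rpow {q t : ℝ} (hb : ∀ i ∈ s, 0 ≤ b i) (hq : 0 ≤ q)
    (ht : 0 ≤ t) : #{i ∈ s | t ≤ b i} * t ^ q ≤ ∑ i ∈ s, b i ^ q :=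
  calc #{i ∈ s | t ≤ b i} * t ^ q
      = #{i ∈ s | t ≤ b i} • t ^ q := (nsmul_eq_mul _ _).symm
    _ ≤ ∑ i ∈ s with t ≤ b i, b i ^ q :=
        card_nsmul_le_sum _ _ _ fun _ hi ↦ Real.rpow_le_rpow ht (mem_filter.1 hi).2 hq
    _ ≤ ∑ i ∈ s, b i ^ q :=
        sum_le_sum_of_subset_of_nonneg (filter_subset _ _)
          fun i hi _ ↦ Real.rpow_nonneg (hb i hi) q

theorem card_filter_le_rpow_le {q r t : ℝ} (hb : ∀ i ∈ s, 0 ≤ b i) (hq : 0 ≤ q) (hr : 0 ≤ r)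
    (ht : 0 < t) :
    (#{i ∈ s | t ≤ b i} : ℝ) ^ r ≤ (∑ i ∈ s, b i ^ q) ^ r * t ^ (-(q * r)) := by
  have hS : 0 ≤ ∑ i ∈ s, b i ^ q := sum_nonneg fun i hi ↦ Real.rpow_nonneg (hb i hi) q
  calc (#{i ∈ s | t ≤ b i} : ℝ) ^ r
      ≤ ((∑ i ∈ s, b i ^ q) / t ^ q) ^ r := by
        gcongr
        exact (le_div_iff₀ (by positivity)).2 (card_filter_le_mul_rpow_le_sum_rpow hb hq ht.le)
    _ = (∑ i ∈ s, b i ^ q) ^ r * t ^ (-(q * r)) := by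
        rw [Real.div_rpow hS (by positivity), ← Real.rpow_mul ht.le, Real.rpow_neg ht.le,
          div_eq_mul_inv]

theorem le_sum_rpow_rpow_inv {q : ℝ} (hb : ∀ i ∈ s, 0 ≤ b i) (hq : 0 < q) {i : ι} (hi : i ∈ s) :
    b i ≤ (∑ j ∈ s, b j ^ q) ^ q⁻¹ := by
  have hbq : ∀ j ∈ s, 0 ≤ b j ^ q := fun j hj ↦ Real.rpow_nonneg (hb j hj) q
  rw [Real.le_rpow_inv_iff_of_pos (hb i hi) (sum_nonneg hbq) hq]
  exact single_le_sum hbq hi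

end LevelSets

theorem integral_const_mul_rpow_neg {a c M : ℝ} (ha : a < 1) :
    ∫ t in (0 : ℝ)..M, c * t ^ (-a) = c * (M ^ (1 - a) / (1 - a)) := by
  rw [intervalIntegral.integral_const_mul, integral_rpow (.inl (neg_lt_neg ha)), neg_add_eq_sub,
    Real.zero_rpow (sub_pos.2 ha).ne', sub_zero]

theorem exists_sign_abs_mul_eq (u : ℝ) : ∃ σ : ℝ, (σ = 1 ∨ σ = -1) ∧ |u| * σ = u := by
  rcases abs_choice u with hu | hu
  · exact ⟨1, .inl rfl, by rw [hu, mul_one]⟩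
  · exact ⟨-1, .inr rfl, by rw [hu, neg_mul_neg, mul_one]⟩

section CardBound

variable {ι E : Type*} [SeminormedAddCommGroup E] [NormedSpace ℝ E] {s : Finset ι}

theorem norm_sum_smul_le_of_norm_sum_le_card_rpow {C q r : ℝ} {b : ι → ℝ} {y : ι → E}
    (hC : 0 ≤ C) (hq : 0 < q) (hr : 0 ≤ r) (hqr : q * r < 1) (hb : ∀ i ∈ s, 0 ≤ b i)
    (hy : ∀ A ⊆ s, ‖∑ i ∈ A, y i‖ ≤ C * (#A : ℝ) ^ r) :
    ‖∑ i ∈ s, b i • y i‖ ≤ C / (1 - q * r) * (∑ i ∈ s, b i ^ q) ^ q⁻¹ := by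
  set S := ∑ i ∈ s, b i ^ q
  have hS : 0 ≤ S := sum_nonneg fun i hi ↦ Real.rpow_nonneg (hb i hi) q
  have level_bound : ∀ t ∈ Set.Ioc 0 (S ^ q⁻¹),
      ‖∑ i ∈ s with t ≤ b i, y i‖ ≤ C * S ^ r * t ^ (-(q * r)) := fun t ht ↦
    calc ‖∑ i ∈ s with t ≤ b i, y i‖
        ≤ C * (#{i ∈ s | t ≤ b i} : ℝ) ^ r := hy _ (filter_subset _ _)
      _ ≤ C * (S ^ r * t ^ (-(q * r))) := by
          gcongr
          exact card_filter_le_rpow_le hb hq.le hr ht.1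
      _ = C * S ^ r * t ^ (-(q * r)) := (mul_assoc _ _ _).symm
  have exponents : S ^ r * (S ^ q⁻¹) ^ (1 - q * r) = S ^ q⁻¹ := by
    have hq_inv : q⁻¹ * (1 - q * r) = q⁻¹ - r := by field_simp
    rw [← Real.rpow_mul hS, hq_inv, ← Real.rpow_add' hS (by simpa using hq.ne'),
      add_sub_cancel]
  calc ‖∑ i ∈ s, b i • y i‖
      ≤ ∫ t in (0 : ℝ)..S ^ q⁻¹, C * S ^ r * t ^ (-(q * r)) :=
        norm_sum_smul_le_integral (by positivity)
          (fun i hi ↦ ⟨hb i hi, le_sum_rpow_rpow_inv hb hq hi⟩)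
          ((intervalIntegral.intervalIntegrable_rpow' (neg_lt_neg hqr)).const_mul _) level_bound
    _ = C * S ^ r * ((S ^ q⁻¹) ^ (1 - q * r) / (1 - q * r)) := integral_const_mul_rpow_neg hqr
    _ = C / (1 - q * r) * (S ^ r * (S ^ q⁻¹) ^ (1 - q * r)) := by ring
    _ = C / (1 - q * r) * S ^ q⁻¹ := by rw [exponents]

theorem upper_ellp_estimate_of_alternating_sums_general {p q C : ℝ} (hq : 0 < q) (hqp : q < p)
    (hC : 0 ≤ C) {x : ι → E}
    (hx : ∀ ε : ι → ℝ, (∀ i, ε i = 1 ∨ ε i = -1) →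
      ∀ A ⊆ s, ‖∑ i ∈ A, ε i • x i‖ ≤ C * (#A : ℝ) ^ (1 / p)) (a : ι → ℝ) :
    ‖∑ i ∈ s, a i • x i‖ ≤ C / (1 - q / p) * (∑ i ∈ s, |a i| ^ q) ^ (1 / q) := by
  have hp : 0 < p := hq.trans hqp
  choose ε hε haε using fun i ↦ exists_sign_abs_mul_eq (a i)
  have hqp' : q * (1 / p) < 1 := by rwa [mul_one_div, div_lt_one hp]
  simpa only [smul_smul, haε, mul_one_div, ← one_div] using
    norm_sum_smul_le_of_norm_sum_le_card_rpow hC hq (one_div_nonneg.2 hp.le) hqp'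
      (fun i _ ↦ abs_nonneg (a i)) (hx ε hε)

end CardBound

theorem sum_comp_orderEmbOfFin {ι M : Type*} [LinearOrder ι] [AddCommMonoid M] (A : Finset ι)
    (f : ι → M) : ∑ j, f (A.orderEmbOfFin rfl j) = ∑ i ∈ A, f i :=
  calc ∑ j, f (A.orderEmbOfFin rfl j)
      = ∑ i ∈ univ.map (A.orderEmbOfFin rfl).toEmbedding, f i := (sum_map univ _ f).symm
    _ = ∑ i ∈ A, f i := by rw [map_orderEmbOfFin_univ]

theorem norm_sum_le_of_forall_strictMono {ι E : Type*} [LinearOrder ι] [SeminormedAddCommGroup E]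
    {f : ι → E} {F : ℕ → ℝ}
    (h : ∀ (l : ℕ) (m : Fin l → ι), StrictMono m → ‖∑ j, f (m j)‖ ≤ F l) (A : Finset ι) :
    ‖∑ i ∈ A, f i‖ ≤ F #A := by
  rw [← sum_comp_orderEmbOfFin]
  exact h #A _ (A.orderEmbOfFin rfl).strictMono

/-- **Lemma 6.8.** Let `1 < p < ∞`, `C > 0` and `ε ∈ (0, p - 1)`. There is a constant `C̃`
(depending only on `p`, `C`, `ε`) such that: whenever `(x_n)_{n=1}^k` is a finite sequence
in a normed space with `‖∑_{j=1}^l ε_j x_{m_j}‖ ≤ C l^{1/p}` for all `l`, all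
`m_1 < ⋯ < m_l` in `{1, …, k}` and all signs `ε_j ∈ {-1, 1}`, one has
`‖∑_n a_n x_n‖ ≤ C̃ (∑_n |a_n|^{p-ε})^{1/(p-ε)}` for all scalars. -/
theorem upper_ellp_estimate_of_alternating_sums
    (p C e : ℝ) (hp : 1 < p) (hC : 0 < C) (he : e ∈ Set.Ioo (0 : ℝ) (p - 1)) :
    ∃ Ct : ℝ, ∀ (W : NormedSpacePkg.{u}) (k : ℕ) (x : Fin k → W.carrier),
      (∀ (l : ℕ) (m : Fin l → Fin k), StrictMono m →
        ∀ ε : Fin l → ℝ, (∀ j, ε j = 1 ∨ ε j = -1) →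
          ‖∑ j : Fin l, ε j • x (m j)‖ ≤ C * (l : ℝ) ^ (1 / p)) →
      ∀ a : Fin k → ℝ,
        ‖∑ n : Fin k, a n • x n‖ ≤ Ct * (∑ n : Fin k, |a n| ^ (p - e)) ^ (1 / (p - e)) := by
  exact ⟨C / (1 - (p - e) / p), fun W k x h ↦
    upper_ellp_estimate_of_alternating_sums_general (by linarith [he.2])
      (sub_lt_self p he.1) hC.le fun ε hε A _ ↦
        norm_sum_le_of_forall_strictMono (F := fun l ↦ C * (l : ℝ) ^ (1 / p))
          (fun l m hm ↦ h l m hm _ fun j ↦ hε (m j)) A⟩
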